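/- arXiv:2011.12800 — 4 statements merged into one kernel-verified Lean document; each statement's English description precedes it below -/
import Mathlib

section
/- Let H and K be complex Hilbert spaces and let A : H → K be a compact linear operator. Then A admits a singular value decomposition: there exist r ∈ ℕ ∪ {∞}, a nonincreasing family of strictly positive real numbers σ_1 ≥ σ_2 ≥ ⋯ ≥ σ_n ≥ ⋯ > 0 (indexed by n < r), an orthonormal family (ψ_n)_{n<r} in H, and an orthonormal family (φ_n)_{n<r} in K, such that for every f ∈ H one has A f = Σ_{n<r} σ_n ⟨f, ψ_n⟩ φ_n (the series converging in K when r = ∞). -/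
/-!
The operator `A† ∘ A` is compact and symmetric, so `H` has a Hilbert basis `b` consisting of its
eigenvectors. Since `⟪A x, A y⟫ = ⟪x, A† (A y)⟫`, the vectors `A (b i)` are pairwise orthogonal, and
applying `A` to the expansion of `f` in `b` gives the decomposition, with `σ i = ‖A (b i)‖` and
`φ i = A (b i) / ‖A (b i)‖` for those `i` with `A (b i) ≠ 0`. The `A (b i)` lie in a totally bounded
set, and two of them of norm at least `ε` are at distance at least `ε`, so only finitely many
singular values exceed any `ε > 0`; this is what allows them to be listed in nonincreasing order.
-/

open Set

section Enumeration

theorem exists_orderIso_nat_lt_enat {α : Type*} [LinearOrder α] (h : ∀ a : α, (Iio a).Finite) :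
    ∃ r : ℕ∞, Nonempty ({n : ℕ // (n : ℕ∞) < r} ≃o α) := by
  have ncard_strictMono : StrictMono fun a : α => (Iio a).ncard := fun a b hab =>
    ncard_lt_ncard (Iio_ssubset_Iio hab) (h b)
  let f : α ≤i ℕ := (OrderEmbedding.ofStrictMono _ ncard_strictMono).ltEmbedding.collapse
  obtain ⟨r, hr⟩ : ∃ r : ℕ∞, {n : ℕ | (n : ℕ∞) < r} = range f := by
    rcases f.isLowerSet_range.eq_univ_or_Iio with hf | ⟨N, hf⟩
    · exact ⟨⊤, by simp [hf]⟩
    · exact ⟨N, by simp [hf, Iio_def]⟩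
  exact ⟨r, ⟨(OrderIso.setCongr _ _ hr).trans f.toOrderEmbedding.orderIso.symm⟩⟩

theorem exists_equiv_antitone_of_finite_setOf_le {ι β : Type*} [LinearOrder β] (s : ι → β)
    (hs : ∀ i, {j | s i ≤ s j}.Finite) :
    ∃ (r : ℕ∞) (e : {n : ℕ // (n : ℕ∞) < r} ≃ ι), Antitone (s ∘ e) := by
  -- The second component breaks ties between equal values of `s`.
  let key : ι → βᵒᵈ ×ₗ Cardinal := fun i => toLex (OrderDual.toDual (s i), embeddingToCardinal i)
  have key_injective : key.Injective := fun i j hij =>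
    embeddingToCardinal.injective (Prod.ext_iff.mp (toLex.injective hij)).2
  have le_of_key_le {i j : ι} (hij : key i ≤ key j) : s j ≤ s i :=
    Prod.Lex.monotone_fst _ _ hij
  have finite_Iio (a : range key) : (Iio a).Finite := by
    obtain ⟨_, i, rfl⟩ := a
    refine ((hs i).image (rangeFactorization key)).subset ?_
    rintro ⟨_, j, rfl⟩ hj
    exact ⟨j, le_of_key_le (le_of_lt hj), rfl⟩
  obtain ⟨r, ⟨e⟩⟩ := exists_orderIso_nat_lt_enat finite_Iio
  let k : ι ≃ range key := Equiv.ofInjective key key_injective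
  refine ⟨r, e.toEquiv.trans k.symm, fun m n hmn => le_of_key_le ?_⟩
  have key_symm (a : range key) : key (k.symm a) = a :=
    congrArg Subtype.val (k.apply_symm_apply a)
  simpa only [Equiv.trans_apply, key_symm] using! e.monotone hmn

end Enumeration

theorem finite_of_totallyBounded_range_of_pairwise_le_dist {ι X : Type*} [PseudoMetricSpace X]
    {x : ι → X} (hx : TotallyBounded (range x)) {ε : ℝ} (hε : 0 < ε)
    (hsep : Pairwise fun i j => ε ≤ dist (x i) (x j)) : Finite ι := by
  obtain ⟨t, ht, hcover⟩ := Metric.totallyBounded_iff.mp hx (ε / 2) (half_pos hε)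
  have exists_center (i : ι) : ∃ y : t, dist (x i) y < ε / 2 := by
    simpa using hcover (mem_range_self i)
  choose center hcenter using exists_center
  have := ht.to_subtype
  refine Finite.of_injective center fun i j hij => by_contra fun hne => ?_
  have hj := hcenter j
  rw [← hij] at hj
  linarith [hsep hne, hcenter i, dist_triangle_right (x i) (x j) (center i)]

section InnerProductSpace

open scoped InnerProductSpace

variable {𝕜 H K : Type*} [RCLike 𝕜] [NormedAddCommGroup H] [InnerProductSpace 𝕜 H]
  [NormedAddCommGroup K] [InnerProductSpace 𝕜 K]

theorem norm_le_dist_of_inner_eq_zero {x y : H} (h : ⟪x, y⟫_𝕜 = 0) : ‖x‖ ≤ dist x y := by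
  have pythagoras : ‖x - y‖ ^ 2 = ‖x‖ ^ 2 + ‖y‖ ^ 2 := by simp [norm_sub_sq (𝕜 := 𝕜), h]
  rw [dist_eq_norm]
  exact le_of_sq_le_sq (by linarith [sq_nonneg ‖y‖]) (norm_nonneg _)

theorem finite_setOf_le_norm_of_pairwise_inner_eq_zero {ι : Type*} {v : ι → H}
    (hv : TotallyBounded (range v)) (horth : Pairwise fun i j => ⟪v i, v j⟫_𝕜 = 0)
    {ε : ℝ} (hε : 0 < ε) : {i | ε ≤ ‖v i‖}.Finite := by
  refine finite_coe_iff.mp <| finite_of_totallyBounded_range_of_pairwise_le_dist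
    (x := fun i : {i | ε ≤ ‖v i‖} => v i)
    (hv.subset (range_comp_subset_range _ v)) hε fun i j hij => ?_
  exact i.2.trans <| norm_le_dist_of_inner_eq_zero (horth (Subtype.coe_ne_coe.mpr hij))

section Eigenbasis

theorem exists_hilbertBasis_subset_iUnion_of_orthogonalFamily [CompleteSpace H] {κ : Type*}
    {V : κ → Submodule 𝕜 H} [∀ k, CompleteSpace (V k)]
    (hV : OrthogonalFamily 𝕜 (fun k => V k) fun k => (V k).subtypeₗᵢ) (hbot : (⨆ k, V k)ᗮ = ⊥) :
    ∃ (w : Set H) (b : HilbertBasis w 𝕜 H), w ⊆ ⋃ k, V k ∧ ⇑b = ((↑) : w → H) := by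
  choose s b _ using fun k => exists_hilbertBasis 𝕜 (V k)
  let v : (Σ k, s k) → H := fun a => (b a.1 a.2 : V a.1)
  have v_orthonormal : Orthonormal 𝕜 v :=
    hV.orthonormal_sigma_orthonormal fun k => (b k).orthonormal
  have orthogonal_le : (Submodule.span 𝕜 (range v))ᗮ ≤ (⨆ k, V k)ᗮ := by
    rw [← Submodule.iInf_orthogonal]
    refine le_iInf fun k x hx => Submodule.orthogonalProjectionOnto_eq_zero_iff.mp ?_
    refine (b k).repr.map_eq_zero_iff.mp (lp.ext (funext fun i => ?_))
    rw [(b k).repr_apply_apply, Submodule.inner_orthogonalProjectionOnto_eq_of_mem_left]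
    exact hx _ (Submodule.subset_span (mem_range_self (⟨k, i⟩ : Σ k, s k)))
  have orthogonal_eq_bot : (Submodule.span 𝕜 (range ((↑) : range v → H)))ᗮ = ⊥ := by
    rw [Subtype.range_coe]
    exact le_bot_iff.mp (orthogonal_le.trans_eq hbot)
  refine ⟨range v, .mkOfOrthogonalEqBot v_orthonormal.toSubtypeRange orthogonal_eq_bot, ?_,
    HilbertBasis.coe_mkOfOrthogonalEqBot _ _⟩
  rintro _ ⟨a, rfl⟩
  exact mem_iUnion_of_mem a.1 (b a.1 a.2).2

theorem exists_hilbertBasis_apply_eq_smul [CompleteSpace H] {T : H →L[𝕜] H}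
    (hT : IsCompactOperator T) (hsymm : (T : H →ₗ[𝕜] H).IsSymmetric) :
    ∃ (w : Set H) (b : HilbertBasis w 𝕜 H), ∀ i, ∃ μ : 𝕜, T (b i) = μ • b i := by
  obtain ⟨w, b, hw, hb⟩ := exists_hilbertBasis_subset_iUnion_of_orthogonalFamily
    hsymm.orthogonalFamily_eigenspaces
    (ContinuousLinearMap.orthogonalComplement_iSup_eigenspaces_eq_bot hT hsymm)
  refine ⟨w, b, fun i => ?_⟩
  obtain ⟨μ, hμ⟩ := mem_iUnion.mp (hw i.2)
  exact ⟨μ, by simpa only [hb] using! Module.End.mem_eigenspace_iff.mp hμ⟩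

theorem exists_isCompactOperator_inner_eq_inner_apply [CompleteSpace H] {A : H →L[𝕜] K}
    (hA : IsCompactOperator A) :
    ∃ T : H →L[𝕜] H, IsCompactOperator T ∧ ∀ x y, ⟪A x, A y⟫_𝕜 = ⟪x, T y⟫_𝕜 := by
  -- The adjoint only exists after passing to the completion of `K`.
  let B : H →L[𝕜] UniformSpace.Completion K := UniformSpace.Completion.toComplL ∘L A
  have hB : IsCompactOperator B := hA.clm_comp (UniformSpace.Completion.toComplL (𝕜 := 𝕜))
  refine ⟨B.adjoint ∘L B, hB.clm_comp B.adjoint, fun x y => ?_⟩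
  rw [ContinuousLinearMap.comp_apply, ContinuousLinearMap.adjoint_inner_right]
  exact (UniformSpace.Completion.inner_coe _ _).symm

theorem exists_hilbertBasis_pairwise_inner_apply_eq_zero [CompleteSpace H] {A : H →L[𝕜] K}
    (hA : IsCompactOperator A) :
    ∃ (w : Set H) (b : HilbertBasis w 𝕜 H), Pairwise fun i j => ⟪A (b i), A (b j)⟫_𝕜 = 0 := by
  obtain ⟨T, hT, inner_eq⟩ := exists_isCompactOperator_inner_eq_inner_apply hA
  have hsymm : (T : H →ₗ[𝕜] H).IsSymmetric := fun x y => by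
    rw [ContinuousLinearMap.coe_coe, ← inner_eq, ← inner_conj_symm, ← inner_eq, inner_conj_symm]
  obtain ⟨w, b, hb⟩ := exists_hilbertBasis_apply_eq_smul hT hsymm
  refine ⟨w, b, fun i j hij => ?_⟩
  obtain ⟨μ, hμ⟩ := hb j
  rw [inner_eq, hμ, inner_smul_right, b.orthonormal.2 hij, mul_zero]

end Eigenbasis

/-- A singular system of `A`: positive singular values `σ` and orthonormal families of right and
left singular vectors `ψ` and `φ` which together decompose `A`. The index type is arbitrary, so
neither countability nor any ordering of the singular values is part of the notion. -/
structure IsSingularSystem {ι : Type*} (A : H →L[𝕜] K) (σ : ι → ℝ) (ψ : ι → H) (φ : ι → K) :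
    Prop where
  pos : ∀ i, 0 < σ i
  orthonormal_right : Orthonormal 𝕜 ψ
  orthonormal_left : Orthonormal 𝕜 φ
  hasSum : ∀ f, HasSum (fun i => ((σ i : 𝕜) * ⟪ψ i, f⟫_𝕜) • φ i) (A f)

namespace IsSingularSystem

variable {ι : Type*} {A : H →L[𝕜] K} {σ : ι → ℝ} {ψ : ι → H} {φ : ι → K}

theorem comp_equiv {κ : Type*} (h : IsSingularSystem A σ ψ φ) (e : κ ≃ ι) :
    IsSingularSystem A (σ ∘ e) (ψ ∘ e) (φ ∘ e) where
  pos k := h.pos (e k)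
  orthonormal_right := h.orthonormal_right.comp e e.injective
  orthonormal_left := h.orthonormal_left.comp e e.injective
  hasSum f := e.hasSum_iff.mpr (h.hasSum f)

theorem apply_right (h : IsSingularSystem A σ ψ φ) (i : ι) : A (ψ i) = (σ i : 𝕜) • φ i := by
  refine (h.hasSum (ψ i)).unique ?_
  convert hasSum_single i fun j hj => ?_ using 1
  · simp [inner_self_eq_norm_sq_to_K, h.orthonormal_right.1 i]
  · simp [h.orthonormal_right.2 hj]

theorem finite_setOf_le (h : IsSingularSystem A σ ψ φ) (hA : IsCompactOperator A) {ε : ℝ}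
    (hε : 0 < ε) : {i | ε ≤ σ i}.Finite := by
  have totallyBounded_range : TotallyBounded (range (A ∘ ψ)) := by
    refine (hA.isCompact_closure_image_closedBall 1).totallyBounded.subset ?_
    rintro _ ⟨i, rfl⟩
    exact subset_closure ⟨ψ i, by simp [h.orthonormal_right.1 i], rfl⟩
  have pairwise_orthogonal : Pairwise fun i j => ⟪(A ∘ ψ) i, (A ∘ ψ) j⟫_𝕜 = 0 := fun i j hij => by
    simp [h.apply_right, inner_smul_left, inner_smul_right, h.orthonormal_left.2 hij]
  have norm_eq (i : ι) : ‖(A ∘ ψ) i‖ = σ i := by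
    simp [h.apply_right, norm_smul, h.orthonormal_left.1 i, (h.pos i).le]
  simpa only [norm_eq] using
    finite_setOf_le_norm_of_pairwise_inner_eq_zero totallyBounded_range pairwise_orthogonal hε

theorem of_hilbertBasis {b : HilbertBasis ι 𝕜 H}
    (horth : Pairwise fun i j => ⟪A (b i), A (b j)⟫_𝕜 = 0) :
    IsSingularSystem A (fun i : {i // A (b i) ≠ 0} => ‖A (b i)‖) (fun i => b i)
      (fun i => (‖A (b i)‖⁻¹ : 𝕜) • A (b i)) where
  pos i := norm_pos_iff.mpr i.2
  orthonormal_right := b.orthonormal.comp _ Subtype.val_injective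
  orthonormal_left := by
    refine ⟨fun i => norm_smul_inv_norm i.2, fun i j hij => ?_⟩
    beta_reduce
    rw [inner_smul_left, inner_smul_right, horth (Subtype.coe_ne_coe.mpr hij), mul_zero, mul_zero]
  hasSum f := by
    have hasSum_basis : HasSum (fun i => ⟪b i, f⟫_𝕜 • A (b i)) (A f) := by
      simpa only [map_smul, b.repr_apply_apply] using (b.hasSum_repr f).mapL A
    have eq_zero_of_notMem_range (i : ι) (hi : i ∉ range ((↑) : {i // A (b i) ≠ 0} → ι)) :
        ⟪b i, f⟫_𝕜 • A (b i) = 0 := by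
      have apply_eq_zero : A (b i) = 0 := by simpa using hi
      rw [apply_eq_zero, smul_zero]
    have hasSum_subtype :=
      (Subtype.val_injective.hasSum_iff eq_zero_of_notMem_range).mpr hasSum_basis
    convert hasSum_subtype using 2 with i
    have norm_ne_zero : (‖A (b i)‖ : 𝕜) ≠ 0 := by simpa using i.2
    rw [smul_smul, mul_right_comm, mul_inv_cancel₀ norm_ne_zero, one_mul]
    rfl

end IsSingularSystem

theorem exists_antitone_isSingularSystem [CompleteSpace H] {A : H →L[𝕜] K}
    (hA : IsCompactOperator A) :
    ∃ (r : ℕ∞) (σ : {n : ℕ // (n : ℕ∞) < r} → ℝ) (ψ : {n : ℕ // (n : ℕ∞) < r} → H)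
      (φ : {n : ℕ // (n : ℕ∞) < r} → K), Antitone σ ∧ IsSingularSystem A σ ψ φ := by
  obtain ⟨w, b, hb⟩ := exists_hilbertBasis_pairwise_inner_apply_eq_zero hA
  have h := IsSingularSystem.of_hilbertBasis hb
  obtain ⟨r, e, he⟩ := exists_equiv_antitone_of_finite_setOf_le _
    fun i => h.finite_setOf_le hA (h.pos i)
  exact ⟨r, _, _, _, he, h.comp_equiv e⟩

theorem compact_operator_has_svd_general [CompleteSpace H] (A : H →L[𝕜] K)
    (hA : IsCompactOperator A) :
    ∃ (r : ℕ∞) (σ : ℕ → ℝ) (ψ : ℕ → H) (φ : ℕ → K),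
      (∀ n : ℕ, (n : ℕ∞) < r → 0 < σ n) ∧
      (∀ m n : ℕ, (m : ℕ∞) < r → (n : ℕ∞) < r → m ≤ n → σ n ≤ σ m) ∧
      Orthonormal 𝕜 (fun n : {n : ℕ // (n : ℕ∞) < r} => ψ n.1) ∧
      Orthonormal 𝕜 (fun n : {n : ℕ // (n : ℕ∞) < r} => φ n.1) ∧
      (∀ f : H, HasSum
        (fun n : {n : ℕ // (n : ℕ∞) < r} => ((σ n.1 : 𝕜) * ⟪ψ n.1, f⟫_𝕜) • φ n.1) (A f)) := by
  obtain ⟨r, σ, ψ, φ, σ_antitone, h⟩ := exists_antitone_isSingularSystem hA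
  obtain ⟨σ, rfl⟩ := Subtype.val_injective.surjective_comp_right σ
  obtain ⟨ψ, rfl⟩ := Subtype.val_injective.surjective_comp_right ψ
  obtain ⟨φ, rfl⟩ := Subtype.val_injective.surjective_comp_right φ
  exact ⟨r, σ, ψ, φ, fun n hn => h.pos ⟨n, hn⟩,
    fun m n hm hn hmn => σ_antitone (a := ⟨m, hm⟩) (b := ⟨n, hn⟩) hmn,
    h.orthonormal_right, h.orthonormal_left, h.hasSum⟩

end InnerProductSpace

/-- **Singular value decomposition of a compact operator.**
Let `H` and `K` be complex Hilbert spaces and `A : H → K` a compact linear operator.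
Then there exist `r ∈ ℕ ∪ {∞}`, a nonincreasing family of strictly positive singular
values `(σ n)` for `n < r`, an orthonormal family `(ψ n)` in `H` and an orthonormal
family `(φ n)` in `K`, such that `A f = Σ_{n<r} σ n ⟨f, ψ n⟩ φ n` for every `f ∈ H`
(the series converging in `K`).  Here the paper's inner product `⟨f, ψ⟩`, linear in the
first entry, is Mathlib's `inner ψ f`. -/
theorem compact_operator_has_svd {H K : Type*}
    [NormedAddCommGroup H] [InnerProductSpace ℂ H] [CompleteSpace H]
    [NormedAddCommGroup K] [InnerProductSpace ℂ K] [CompleteSpace K]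
    (A : H →L[ℂ] K) (hA : IsCompactOperator A) :
    ∃ (r : ℕ∞) (σ : ℕ → ℝ) (ψ : ℕ → H) (φ : ℕ → K),
      (∀ n : ℕ, (n : ℕ∞) < r → 0 < σ n) ∧
      (∀ m n : ℕ, (m : ℕ∞) < r → (n : ℕ∞) < r → m ≤ n → σ n ≤ σ m) ∧
      Orthonormal ℂ (fun n : {n : ℕ // (n : ℕ∞) < r} => ψ n.1) ∧
      Orthonormal ℂ (fun n : {n : ℕ // (n : ℕ∞) < r} => φ n.1) ∧
      (∀ f : H, HasSum
        (fun n : {n : ℕ // (n : ℕ∞) < r} =>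
          ((σ n.1 : ℂ) * (inner ℂ (ψ n.1) f : ℂ)) • φ n.1) (A f)) :=
  compact_operator_has_svd_general A hA
end

section
/- Let H and K be complex Hilbert spaces and let A : H → K be a compact linear operator with singular value decomposition A f = Σ_{n<r} σ_n ⟨f, ψ_n⟩ φ_n. For g ∈ K, the equation A f = g has a solution f ∈ H if and only if the following two conditions hold: (1) g belongs to the orthogonal complement of the kernel of the adjoint A*, and (2) Σ_{n<r} σ_n^{-2} |⟨g, φ_n⟩|² < ∞. -/
/-!
A vector in the closed span of the orthonormal family `φ` is determined by its coefficients, and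
`φ n` has coefficient `σ n * ⟪ψ n, f⟫` in `A f`. Since `(ker A†)ᗮ` is the closure of the range
of `A`, which lies in that closed span, solving `A f = g` for `g` in `(ker A†)ᗮ` means finding `f`
with prescribed coefficients `⟪ψ n, f⟫ = (σ n)⁻¹ * ⟪φ n, g⟫`. By Bessel and Riesz–Fischer such an
`f` exists exactly when these coefficients are square-summable.
-/

section

open Submodule
open scoped InnerProductSpace

variable {𝕜 ι E F : Type*} [RCLike 𝕜]
  [NormedAddCommGroup E] [InnerProductSpace 𝕜 E] [NormedAddCommGroup F] [InnerProductSpace 𝕜 F]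

theorem mem_topologicalClosure_span_of_hasSum {v : ι → E} {c : ι → 𝕜} {x : E}
    (h : HasSum (fun i ↦ c i • v i) x) : x ∈ (span 𝕜 (Set.range v)).topologicalClosure :=
  mem_closure_of_tendsto h <| .of_forall fun _ ↦
    sum_mem fun i _ ↦ smul_mem _ _ (subset_span (Set.mem_range_self i))

theorem eq_of_mem_topologicalClosure_span_of_inner_eq {v : ι → E} {x y : E}
    (hx : x ∈ (span 𝕜 (Set.range v)).topologicalClosure)
    (hy : y ∈ (span 𝕜 (Set.range v)).topologicalClosure)
    (h : ∀ i, ⟪v i, x⟫_𝕜 = ⟪v i, y⟫_𝕜) : x = y := by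
  have hspan : span 𝕜 (Set.range v) ≤ (𝕜 ∙ (x - y))ᗮ := span_le.mpr <| by
    rintro _ ⟨i, rfl⟩
    rw [SetLike.mem_coe, mem_orthogonal_singleton_iff_inner_left, inner_sub_right, h, sub_self]
  have hclosure := topologicalClosure_minimal _ hspan (isClosed_orthogonal _)
  have hself : ⟪x - y, x - y⟫_𝕜 = 0 :=
    mem_orthogonal_singleton_iff_inner_left.mp (hclosure (sub_mem hx hy))
  exact sub_eq_zero.mp (inner_self_eq_zero.mp hself)

theorem inner_eq_of_hasSum_smul_orthonormal {v : ι → E} (hv : Orthonormal 𝕜 v) {c : ι → 𝕜}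
    {x : E} (h : HasSum (fun i ↦ c i • v i) x) (i : ι) : ⟪v i, x⟫_𝕜 = c i := by
  have hinner : HasSum (fun j ↦ ⟪v i, c j • v j⟫_𝕜) ⟪v i, x⟫_𝕜 := h.mapL (innerSL 𝕜 (v i))
  have hsingle := hasSum_single i fun j hj ↦ show ⟪v i, c j • v j⟫_𝕜 = 0 by
    rw [inner_smul_right, hv.2 hj.symm, mul_zero]
  rw [hinner.unique hsingle, inner_smul_right, inner_self_eq_one_of_norm_eq_one (hv.1 i), mul_one]

theorem exists_forall_inner_eq_iff_summable_norm_sq [CompleteSpace E] {v : ι → E}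
    (hv : Orthonormal 𝕜 v) {c : ι → 𝕜} :
    (∃ x, ∀ i, ⟪v i, x⟫_𝕜 = c i) ↔ Summable fun i ↦ ‖c i‖ ^ 2 := by
  constructor
  · rintro ⟨x, hx⟩
    simpa only [hx] using hv.inner_products_summable (x := x)
  · intro hc
    have hsum : Summable fun i ↦ c i • v i := by
      simpa using (hv.orthogonalFamily.summable_iff_norm_sq_summable c).mpr hc
    exact ⟨_, inner_eq_of_hasSum_smul_orthonormal hv hsum.hasSum⟩

theorem orthogonal_ker_adjoint [CompleteSpace E] [CompleteSpace F] (A : E →L[𝕜] F) :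
    (ContinuousLinearMap.adjoint A).kerᗮ = A.range.topologicalClosure := by
  rw [ContinuousLinearMap.orthogonal_ker, ContinuousLinearMap.adjoint_adjoint]

theorem apply_eq_iff_inner_eq_of_hasSum {A : E →L[𝕜] F} {σ : ι → 𝕜} {ψ : ι → E} {φ : ι → F}
    (hσ : ∀ i, σ i ≠ 0) (hφ : Orthonormal 𝕜 φ)
    (hsum : ∀ f, HasSum (fun i ↦ (σ i * ⟪ψ i, f⟫_𝕜) • φ i) (A f))
    {g : F} (hg : g ∈ A.range.topologicalClosure) {f : E} :
    A f = g ↔ ∀ i, ⟪ψ i, f⟫_𝕜 = (σ i)⁻¹ * ⟪φ i, g⟫_𝕜 := by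
  have hcoeff := inner_eq_of_hasSum_smul_orthonormal hφ (hsum f)
  have hrange : A.range ≤ (span 𝕜 (Set.range φ)).topologicalClosure := by
    rintro _ ⟨u, rfl⟩
    exact mem_topologicalClosure_span_of_hasSum (hsum u)
  have hg_span := topologicalClosure_minimal _ hrange (isClosed_topologicalClosure _) hg
  constructor
  · rintro rfl i
    rw [hcoeff, inv_mul_cancel_left₀ (hσ i)]
  · intro h
    refine eq_of_mem_topologicalClosure_span_of_inner_eq (hrange ⟨f, rfl⟩) hg_span fun i ↦ ?_
    rw [hcoeff, h, mul_inv_cancel_left₀ (hσ i)]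

theorem picard_criterion_general [CompleteSpace E] [CompleteSpace F] {A : E →L[𝕜] F}
    {σ : ι → 𝕜} {ψ : ι → E} {φ : ι → F} (hσ : ∀ i, σ i ≠ 0)
    (hψ : Orthonormal 𝕜 ψ) (hφ : Orthonormal 𝕜 φ)
    (hsum : ∀ f, HasSum (fun i ↦ (σ i * ⟪ψ i, f⟫_𝕜) • φ i) (A f)) (g : F) :
    (∃ f, A f = g) ↔ g ∈ (ContinuousLinearMap.adjoint A).kerᗮ ∧
      Summable fun i ↦ (‖σ i‖ ^ 2)⁻¹ * ‖⟪φ i, g⟫_𝕜‖ ^ 2 := by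
  have hmem : (∃ f, A f = g) → g ∈ A.range.topologicalClosure := fun h ↦ subset_closure h
  calc (∃ f, A f = g)
      ↔ g ∈ A.range.topologicalClosure ∧ ∃ f, A f = g := (and_iff_right_of_imp hmem).symm
    _ ↔ g ∈ A.range.topologicalClosure ∧ ∃ f, ∀ i, ⟪ψ i, f⟫_𝕜 = (σ i)⁻¹ * ⟪φ i, g⟫_𝕜 :=
        and_congr_right fun hg ↦ exists_congr fun _ ↦
          apply_eq_iff_inner_eq_of_hasSum hσ hφ hsum hg
    _ ↔ g ∈ (ContinuousLinearMap.adjoint A).kerᗮ ∧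
          Summable fun i ↦ (‖σ i‖ ^ 2)⁻¹ * ‖⟪φ i, g⟫_𝕜‖ ^ 2 := by
        simp only [orthogonal_ker_adjoint, exists_forall_inner_eq_iff_summable_norm_sq hψ,
          norm_mul, norm_inv, mul_pow, inv_pow]

end

/-- **Picard criterion.**  Let `A : H → K` be a compact operator between complex Hilbert
spaces with singular value decomposition `A f = Σ_{n<r} σ n ⟨f, ψ n⟩ φ n`.  For `g ∈ K`,
the equation `A f = g` has a solution `f ∈ H` if and only if (1) `g` belongs to the
orthogonal complement of the kernel of the adjoint `A*`, and
(2) `Σ_{n<r} σ n ^ (-2) * |⟨g, φ n⟩|² < ∞`. -/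
theorem picard_criterion {H K : Type*}
    [NormedAddCommGroup H] [InnerProductSpace ℂ H] [CompleteSpace H]
    [NormedAddCommGroup K] [InnerProductSpace ℂ K] [CompleteSpace K]
    (A : H →L[ℂ] K) (hA : IsCompactOperator A)
    (r : ℕ∞) (σ : ℕ → ℝ) (ψ : ℕ → H) (φ : ℕ → K)
    (hσpos : ∀ n : ℕ, (n : ℕ∞) < r → 0 < σ n)
    (hσmono : ∀ m n : ℕ, (m : ℕ∞) < r → (n : ℕ∞) < r → m ≤ n → σ n ≤ σ m)
    (hψ : Orthonormal ℂ (fun n : {n : ℕ // (n : ℕ∞) < r} => ψ n.1))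
    (hφ : Orthonormal ℂ (fun n : {n : ℕ // (n : ℕ∞) < r} => φ n.1))
    (hsum : ∀ f : H, HasSum
      (fun n : {n : ℕ // (n : ℕ∞) < r} =>
        ((σ n.1 : ℂ) * (inner ℂ (ψ n.1) f : ℂ)) • φ n.1) (A f))
    (g : K) :
    (∃ f : H, A f = g) ↔
      (g ∈ (LinearMap.ker (ContinuousLinearMap.adjoint A : K →ₗ[ℂ] H))ᗮ ∧
       Summable (fun n : {n : ℕ // (n : ℕ∞) < r} =>
         (σ n.1 ^ 2)⁻¹ * ‖(inner ℂ (φ n.1) g : ℂ)‖ ^ 2)) := by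
  simpa only [Complex.norm_real, Real.norm_eq_abs, sq_abs] using
    picard_criterion_general (σ := fun n : {n : ℕ // (n : ℕ∞) < r} ↦ (σ n.1 : ℂ))
      (fun n ↦ Complex.ofReal_ne_zero.mpr (hσpos n.1 n.2).ne') hψ hφ hsum g
end

section
/- Let H and K be complex Hilbert spaces, A : H → K a compact linear operator with pseudo-inverse A† defined on D(A†), and (T_α)_{α>0} a family of bounded linear operators T_α : K → H such that T_α g' → A† g' as α ↓ 0 for every g' ∈ D(A†). Fix g ∈ D(A†). Suppose that for each ε > 0 an element g^ε ∈ K with ‖g − g^ε‖ ≤ ε is given, and that α : (0,∞) → (0,∞) is a parameter-choice function satisfying α(ε) → 0 and ‖T_{α(ε)}‖ · ε → 0 as ε ↓ 0. Then T_{α(ε)} g^ε → A† g as ε ↓ 0; more precisely, ‖T_{α(ε)} g^ε − A† g‖ ≤ ‖T_{α(ε)}‖ ε + ‖T_{α(ε)} g − A† g‖, and the right-hand side tends to 0. -/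
open Filter Topology

section PerturbedData

variable {𝕜₁ 𝕜₂ E F ι κ : Type*} [NontriviallyNormedField 𝕜₁] [NontriviallyNormedField 𝕜₂]
  [SeminormedAddCommGroup E] [NormedSpace 𝕜₁ E] [SeminormedAddCommGroup F] [NormedSpace 𝕜₂ F]
  {τ : 𝕜₁ →+* 𝕜₂} [RingHomIsometric τ]

theorem norm_apply_sub_le_opNorm_mul_add_norm_apply_sub (S : E →SL[τ] F) {y z : E} {δ : ℝ}
    (hz : ‖y - z‖ ≤ δ) (x : F) : ‖S z - x‖ ≤ ‖S‖ * δ + ‖S y - x‖ := by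
  have data_error : ‖S z - S y‖ ≤ ‖S‖ * δ := by
    rw [norm_sub_rev, ← map_sub]
    exact S.le_opNorm_of_le hz
  calc ‖S z - x‖ ≤ ‖S z - S y‖ + ‖S y - x‖ := norm_sub_le_norm_sub_add_norm_sub _ _ _
    _ ≤ ‖S‖ * δ + ‖S y - x‖ := by gcongr

theorem tendsto_apply_of_tendsto_opNorm_mul_zero {l : Filter ι} {S : ι → E →SL[τ] F}
    {y : E} {x : F} {z : ι → E} {δ : ι → ℝ} (hS : Tendsto (fun i => S i y) l (𝓝 x))
    (hSδ : Tendsto (fun i => ‖S i‖ * δ i) l (𝓝 0)) (hz : ∀ᶠ i in l, ‖y - z i‖ ≤ δ i) :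
    Tendsto (fun i => S i (z i)) l (𝓝 x) := by
  have bound_tendsto_zero : Tendsto (fun i => ‖S i‖ * δ i + ‖S i y - x‖) l (𝓝 0) := by
    simpa only [add_zero] using hSδ.add (tendsto_iff_norm_sub_tendsto_zero.mp hS)
  refine tendsto_iff_norm_sub_tendsto_zero.mpr
    (squeeze_zero' (.of_forall fun _ => norm_nonneg _) ?_ bound_tendsto_zero)
  exact hz.mono fun i hi => norm_apply_sub_le_opNorm_mul_add_norm_apply_sub (S i) hi x

theorem regularization_convergence_general {l : Filter ι} {p : Filter κ} {T : κ → E →SL[τ] F}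
    {y : E} {x : F} (hT : Tendsto (fun α => T α y) p (𝓝 x))
    {s : Set ι} (hs : s ∈ l) {z : ι → E} {δ : ι → ℝ} (hz : ∀ i ∈ s, ‖y - z i‖ ≤ δ i)
    {a : ι → κ} (ha : Tendsto a l p) (haT : Tendsto (fun i => ‖T (a i)‖ * δ i) l (𝓝 0)) :
    (∀ i ∈ s, ‖T (a i) (z i) - x‖ ≤ ‖T (a i)‖ * δ i + ‖T (a i) y - x‖) ∧
      Tendsto (fun i => T (a i) (z i)) l (𝓝 x) :=
  ⟨fun i hi => norm_apply_sub_le_opNorm_mul_add_norm_apply_sub (T (a i)) (hz i hi) x,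
    tendsto_apply_of_tendsto_opNorm_mul_zero (hT.comp ha) haT (eventually_of_mem hs hz)⟩

end PerturbedData

/-- **Convergence of a regularization with a parameter choice rule.**
Let `A : H → K` be a compact operator between complex Hilbert spaces with singular value
decomposition, with pseudo-inverse `A†` defined on
`D(A†) = { g ∈ (ker A*)ᗮ : Σ_{n<r} σ n ^ (-2) |⟨g, φ n⟩|² < ∞ }` by
`A† g = Σ_{n<r} σ n ^ (-1) ⟨g, φ n⟩ ψ n`.  Let `(T_α)_{α>0}` be a family of bounded
operators with `T_α g' → A† g'` as `α ↓ 0` for every `g' ∈ D(A†)`.  Fix `g ∈ D(A†)`,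
data `g^ε` with `‖g - g^ε‖ ≤ ε`, and a parameter choice `α(ε) > 0` with `α(ε) → 0` and
`‖T_{α(ε)}‖ ε → 0` as `ε ↓ 0`.  Then
`‖T_{α(ε)} g^ε − A† g‖ ≤ ‖T_{α(ε)}‖ ε + ‖T_{α(ε)} g − A† g‖` and
`T_{α(ε)} g^ε → A† g` as `ε ↓ 0`. -/
theorem regularization_convergence {H K : Type*}
    [NormedAddCommGroup H] [InnerProductSpace ℂ H] [CompleteSpace H]
    [NormedAddCommGroup K] [InnerProductSpace ℂ K] [CompleteSpace K]
    (A : H →L[ℂ] K) (hA : IsCompactOperator A)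
    (r : ℕ∞) (σ : ℕ → ℝ) (ψ : ℕ → H) (φ : ℕ → K)
    (hσpos : ∀ n : ℕ, (n : ℕ∞) < r → 0 < σ n)
    (hσmono : ∀ m n : ℕ, (m : ℕ∞) < r → (n : ℕ∞) < r → m ≤ n → σ n ≤ σ m)
    (hψ : Orthonormal ℂ (fun n : {n : ℕ // (n : ℕ∞) < r} => ψ n.1))
    (hφ : Orthonormal ℂ (fun n : {n : ℕ // (n : ℕ∞) < r} => φ n.1))
    (hsum : ∀ f : H, HasSum
      (fun n : {n : ℕ // (n : ℕ∞) < r} =>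
        ((σ n.1 : ℂ) * (inner ℂ (ψ n.1) f : ℂ)) • φ n.1) (A f))
    (D : Set K)
    (hD : D = {g : K | g ∈ (LinearMap.ker (ContinuousLinearMap.adjoint A : K →ₗ[ℂ] H))ᗮ ∧
      Summable (fun n : {n : ℕ // (n : ℕ∞) < r} =>
        (σ n.1 ^ 2)⁻¹ * ‖(inner ℂ (φ n.1) g : ℂ)‖ ^ 2)})
    (Adag : K → H)
    (hAdag : ∀ g ∈ D, HasSum (fun n : {n : ℕ // (n : ℕ∞) < r} =>
      (((σ n.1)⁻¹ : ℂ) * (inner ℂ (φ n.1) g : ℂ)) • ψ n.1) (Adag g))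
    (T : ℝ → (K →L[ℂ] H))
    (hT : ∀ g' ∈ D, Filter.Tendsto (fun α : ℝ => T α g')
      (nhdsWithin 0 (Set.Ioi 0)) (nhds (Adag g')))
    (g : K) (hg : g ∈ D)
    (gε : ℝ → K) (hgε : ∀ ε : ℝ, 0 < ε → ‖g - gε ε‖ ≤ ε)
    (a : ℝ → ℝ) (ha_pos : ∀ ε : ℝ, 0 < ε → 0 < a ε)
    (ha_lim : Filter.Tendsto a (nhdsWithin 0 (Set.Ioi 0)) (nhds 0))
    (haT : Filter.Tendsto (fun ε : ℝ => ‖T (a ε)‖ * ε)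
      (nhdsWithin 0 (Set.Ioi 0)) (nhds 0)) :
    (∀ ε : ℝ, 0 < ε →
      ‖T (a ε) (gε ε) - Adag g‖ ≤ ‖T (a ε)‖ * ε + ‖T (a ε) g - Adag g‖) ∧
    Filter.Tendsto (fun ε : ℝ => T (a ε) (gε ε))
      (nhdsWithin 0 (Set.Ioi 0)) (nhds (Adag g)) :=
  regularization_convergence_general (hT g hg) self_mem_nhdsWithin hgε
    (tendsto_nhdsWithin_iff.mpr ⟨ha_lim, eventually_mem_nhdsWithin.mono ha_pos⟩) haT
end

section
/- Let H and K be complex Hilbert spaces, A : H → K a bounded linear operator, α > 0, and g ∈ K. Then the operator A* A + α I : H → H is a bijective bounded linear operator, and the element f_α = (A* A + α I)^{-1} A* g is the unique minimizer over H of the Tikhonov–Phillips functional f ↦ ‖A f − g‖² + α ‖f‖². -/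
/-!
The Tikhonov–Phillips functional `J` is quadratic, so its expansion around `f` is exact: a linear
term `2 re (⟪A f - g, A h⟫ + α ⟪f, h⟫)` plus `‖A h‖² + α ‖h‖²`. The normal equation
`(A* A + α) fα = A* g` says that the linear term vanishes at `fα`, so that
`J f ≥ J fα + α ‖f - fα‖²`. The normal equation has exactly one solution because `A* A + α` is
coercive.
-/

open RCLike

open scoped InnerProductSpace

/-- The Tikhonov–Phillips functional `f ↦ ‖A f - g‖² + α ‖f‖²`, whose minimizers are the regularized
solutions of `A f = g`. The operator `A` is only linear and the weight `α` is any real number. -/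
def tikhonovFunctional {R E F : Type*} [Semiring R]
    [SeminormedAddCommGroup E] [Module R E] [SeminormedAddCommGroup F] [Module R F]
    (A : E →ₗ[R] F) (α : ℝ) (g : F) (f : E) : ℝ :=
  ‖A f - g‖ ^ 2 + α * ‖f‖ ^ 2

section Functional

variable {𝕜 E F : Type*} [RCLike 𝕜] [SeminormedAddCommGroup F] [InnerProductSpace 𝕜 F]

section Seminormed

variable [SeminormedAddCommGroup E] [InnerProductSpace 𝕜 E]
  (A : E →ₗ[𝕜] F) (α : ℝ) (g : F)

/-- The variational form of the normal equation `(A* A + α) f = A* g`: the first variation of the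
Tikhonov–Phillips functional vanishes at `f`. Testing against `h` avoids the adjoint, so that `A`
may be any linear map between pre-Hilbert spaces. -/
def WeakNormalEquation (f : E) : Prop :=
  ∀ h, ⟪A f - g, A h⟫_𝕜 + α * ⟪f, h⟫_𝕜 = 0

theorem tikhonovFunctional_add (f h : E) :
    tikhonovFunctional A α g (f + h) =
      tikhonovFunctional A α g f + 2 * re (⟪A f - g, A h⟫_𝕜 + α * ⟪f, h⟫_𝕜) +
        (‖A h‖ ^ 2 + α * ‖h‖ ^ 2) := by
  have residual_add : A (f + h) - g = (A f - g) + A h := by rw [map_add]; abel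
  rw [tikhonovFunctional, tikhonovFunctional, residual_add, norm_add_sq (𝕜 := 𝕜),
    norm_add_sq (𝕜 := 𝕜), map_add, re_ofReal_mul]
  ring

variable {A α g} {f₀ : E}

namespace WeakNormalEquation

theorem tikhonovFunctional_add_mul_norm_sub_sq_le
    (hf₀ : WeakNormalEquation A α g f₀) (f : E) :
    tikhonovFunctional A α g f₀ + α * ‖f - f₀‖ ^ 2 ≤ tikhonovFunctional A α g f := by
  have expansion := tikhonovFunctional_add A α g f₀ (f - f₀)
  rw [add_sub_cancel, hf₀, map_zero] at expansion
  linarith [sq_nonneg ‖A (f - f₀)‖]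

theorem tikhonovFunctional_le (hf₀ : WeakNormalEquation A α g f₀) (hα : 0 ≤ α) (f : E) :
    tikhonovFunctional A α g f₀ ≤ tikhonovFunctional A α g f :=
  (le_add_of_nonneg_right (by positivity)).trans
    (hf₀.tikhonovFunctional_add_mul_norm_sub_sq_le f)

end WeakNormalEquation

end Seminormed

theorem WeakNormalEquation.eq_of_tikhonovFunctional_le
    [NormedAddCommGroup E] [InnerProductSpace 𝕜 E]
    {A : E →ₗ[𝕜] F} {α : ℝ} {g : F} {f₀ f : E} (hf₀ : WeakNormalEquation A α g f₀) (hα : 0 < α)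
    (hf : tikhonovFunctional A α g f ≤ tikhonovFunctional A α g f₀) :
    f = f₀ := by
  have dist_le : α * ‖f - f₀‖ ^ 2 ≤ 0 := by
    linarith [hf₀.tikhonovFunctional_add_mul_norm_sub_sq_le f]
  have dist_eq : ‖f - f₀‖ ^ 2 = 0 :=
    le_antisymm (nonpos_of_mul_nonpos_right dist_le hα) (sq_nonneg _)
  exact sub_eq_zero.mp (norm_eq_zero.mp (sq_eq_zero_iff.mp dist_eq))

end Functional

section HilbertSpace

variable {𝕜 H K : Type*} [RCLike 𝕜] [NormedAddCommGroup H] [InnerProductSpace 𝕜 H]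

theorem bijective_add_smul_id_of_re_inner_nonneg [CompleteSpace H] {T : H →L[𝕜] H}
    (hT : ∀ x, 0 ≤ re ⟪T x, x⟫_𝕜) {α : ℝ} (hα : 0 < α) :
    Function.Bijective ⇑(T + (α : 𝕜) • ContinuousLinearMap.id 𝕜 H) := by
  rw [← ContinuousLinearMap.isUnit_iff_bijective]
  refine ContinuousLinearMap.isUnit_of_forall_le_norm_inner_map _ (c := ⟨α, hα.le⟩) hα fun x ↦ ?_
  calc ‖x‖ ^ 2 * α
    _ ≤ re ⟪T x, x⟫_𝕜 + α * ‖x‖ ^ 2 := by linarith [hT x]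
    _ = re ⟪(T + (α : 𝕜) • ContinuousLinearMap.id 𝕜 H) x, x⟫_𝕜 := by
      simp [inner_add_left, inner_smul_left]
    _ ≤ ‖⟪(T + (α : 𝕜) • ContinuousLinearMap.id 𝕜 H) x, x⟫_𝕜‖ := re_le_norm _

variable [SeminormedAddCommGroup K] [InnerProductSpace 𝕜 K] {A : H →L[𝕜] K} {B : K →L[𝕜] H}

theorem weakNormalEquation_iff_of_adjoint_pair (hB : ∀ x y, ⟪B y, x⟫_𝕜 = ⟪y, A x⟫_𝕜)
    {α : ℝ} {g : K} {f : H} :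
    WeakNormalEquation A.toLinearMap α g f ↔
      (B ∘L A + (α : 𝕜) • ContinuousLinearMap.id 𝕜 H) f = B g := by
  have first_variation (h : H) : ⟪A f - g, A h⟫_𝕜 + α * ⟪f, h⟫_𝕜 =
      ⟪(B ∘L A + (α : 𝕜) • ContinuousLinearMap.id 𝕜 H) f, h⟫_𝕜 - ⟪B g, h⟫_𝕜 := by
    simp only [add_apply, ContinuousLinearMap.comp_apply, smul_apply, ContinuousLinearMap.id_apply,
      inner_add_left, inner_sub_left, inner_smul_left, conj_ofReal, hB]
    ring
  rw [ext_iff_inner_right 𝕜]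
  simp only [WeakNormalEquation, ContinuousLinearMap.coe_coe, first_variation, sub_eq_zero]

theorem tikhonov_phillips_unique_minimizer_general [CompleteSpace H]
    (hB : ∀ x y, ⟪B y, x⟫_𝕜 = ⟪y, A x⟫_𝕜) {α : ℝ} (hα : 0 < α) (g : K) :
    Function.Bijective ⇑(B ∘L A + (α : 𝕜) • ContinuousLinearMap.id 𝕜 H) ∧
    ∀ fα : H, (B ∘L A + (α : 𝕜) • ContinuousLinearMap.id 𝕜 H) fα = B g →
      (∀ f, tikhonovFunctional A.toLinearMap α g fα ≤ tikhonovFunctional A.toLinearMap α g f) ∧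
      ∀ f, (∀ f', tikhonovFunctional A.toLinearMap α g f ≤
          tikhonovFunctional A.toLinearMap α g f') → f = fα := by
  have re_inner_nonneg (x : H) : 0 ≤ re ⟪(B ∘L A) x, x⟫_𝕜 := by
    rw [ContinuousLinearMap.comp_apply, hB]
    exact inner_self_nonneg
  refine ⟨bijective_add_smul_id_of_re_inner_nonneg re_inner_nonneg hα, fun fα hfα ↦ ?_⟩
  have hfα_weak := (weakNormalEquation_iff_of_adjoint_pair hB).mpr hfα
  exact ⟨hfα_weak.tikhonovFunctional_le hα.le,
    fun f hf ↦ hfα_weak.eq_of_tikhonovFunctional_le hα (hf fα)⟩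

end HilbertSpace

/-- **Tikhonov–Phillips regularization.**  Let `A : H → K` be a bounded linear operator
between complex Hilbert spaces, `α > 0` and `g ∈ K`.  Then `A* A + α I : H → H` is a
bijective bounded linear operator, and the element `f_α = (A* A + α I)⁻¹ A* g` (i.e. the
unique `f_α` with `(A* A + α I) f_α = A* g`) is the unique minimizer over `H` of the
Tikhonov–Phillips functional `f ↦ ‖A f − g‖² + α ‖f‖²`. -/
theorem tikhonov_phillips_unique_minimizer {H K : Type*}
    [NormedAddCommGroup H] [InnerProductSpace ℂ H] [CompleteSpace H]
    [NormedAddCommGroup K] [InnerProductSpace ℂ K] [CompleteSpace K]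
    (A : H →L[ℂ] K) (α : ℝ) (hα : 0 < α) (g : K) :
    Function.Bijective
      ⇑((ContinuousLinearMap.adjoint A).comp A + (α : ℂ) • ContinuousLinearMap.id ℂ H) ∧
    ∀ fα : H,
      ((ContinuousLinearMap.adjoint A).comp A + (α : ℂ) • ContinuousLinearMap.id ℂ H) fα
          = ContinuousLinearMap.adjoint A g →
        (∀ f : H, ‖A fα - g‖ ^ 2 + α * ‖fα‖ ^ 2 ≤ ‖A f - g‖ ^ 2 + α * ‖f‖ ^ 2) ∧
        (∀ f : H,
          (∀ f' : H, ‖A f - g‖ ^ 2 + α * ‖f‖ ^ 2 ≤ ‖A f' - g‖ ^ 2 + α * ‖f'‖ ^ 2) →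
          f = fα) := by
  exact tikhonov_phillips_unique_minimizer_general A.adjoint_inner_left hα g
end
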